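/- For every n ≥ 1, the path P_n on n vertices satisfies ρ(P_n) ≤ 1 + n(n−1)/2 − 3·⌊n/7⌋. -/

import Mathlib

/-- `ArrowsR G H` (written `G →r H`) means: every proper vertex coloring of `G`
contains a rainbow induced subgraph isomorphic to `H`, i.e. an induced copy of `H`
(a graph embedding) whose vertices receive pairwise distinct colors. -/
def ArrowsR {α β : Type} (G : SimpleGraph α) (H : SimpleGraph β) : Prop :=
  ∀ c : α → ℕ, (∀ u v : α, G.Adj u v → c u ≠ c v) →
    ∃ f : H ↪g G, Function.Injective fun h => c (f h)

/-- `rho H` is the minimum number of vertices of a graph `G` with `G →r H`. -/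
noncomputable def rho {β : Type} (H : SimpleGraph β) : ℕ :=
  sInf {m : ℕ | ∃ G : SimpleGraph (Fin m), ArrowsR G H}

/-!
Blow up each vertex `v` of `H` to a clique of size `w v`. A proper coloring gives the clique over
`v` a palette of `w v` colors, palettes of adjacent vertices are disjoint, and any system of
distinct representatives of the palettes is a rainbow induced copy of `H`. Hall's condition holds
as soon as every vertex set `S` contains a clique of total weight at least `|S|`.

For the path `0, …, n - 1` the weights `⌊3i/4⌋ + 1` work: if `S` has maximum `x` and
`|S| ≥ ⌊3x/4⌋ + 2`, then `S` misses so few of the numbers up to `x` that it contains an edge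
`{j, j + 1}` with `j` large. Their sum, about `3n²/8`, is small enough except when `n = 7`, where
it is too large by one and better weights are given explicitly.
-/

open Finset

section Arrows

variable {α α' β : Type} {G : SimpleGraph α} {G' : SimpleGraph α'} {H : SimpleGraph β}

theorem ArrowsR.of_iso (h : ArrowsR G H) (e : G ≃g G') : ArrowsR G' H := by
  intro c hc
  obtain ⟨f, hf⟩ := h (c ∘ e) fun u v huv => hc _ _ (e.map_adj_iff.2 huv)
  exact ⟨f.trans e.toEmbedding, hf⟩

theorem ArrowsR.rho_le_card [Fintype α] (h : ArrowsR G H) : rho H ≤ Fintype.card α :=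
  Nat.sInf_le ⟨_, h.of_iso (G.overFinIso rfl)⟩

end Arrows

/-- The graph `H` with each vertex `v` blown up to a clique of size `w v`; the cliques over
adjacent vertices are completely joined. -/
def cliqueBlowup {V : Type*} (H : SimpleGraph V) (w : V → ℕ) : SimpleGraph (Σ v, Fin (w v)) where
  Adj x y := x ≠ y ∧ (x.1 = y.1 ∨ H.Adj x.1 y.1)
  symm := ⟨fun _ _ h => ⟨h.1.symm, h.2.imp Eq.symm SimpleGraph.Adj.symm⟩⟩
  loopless := ⟨fun _ h => h.1 rfl⟩

namespace cliqueBlowup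

variable {V α : Type*} {H : SimpleGraph V} {w : V → ℕ}

/-- The induced copy of `H` in its blow-up that uses the vertex `a v` of the clique over `v`. -/
def transversal (H : SimpleGraph V) (a : ∀ v, Fin (w v)) : H ↪g cliqueBlowup H w where
  toFun v := ⟨v, a v⟩
  inj' _ _ h := congrArg Sigma.fst h
  map_rel_iff' {u v} := by
    constructor
    · rintro ⟨hne, rfl | h⟩
      · exact absurd rfl hne
      · exact h
    · exact fun h => ⟨fun heq => h.ne (congrArg Sigma.fst heq), Or.inr h⟩

variable [DecidableEq α]

/-- The set of colors that a coloring of the blow-up uses on the clique over `v`. -/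
def palette (c : (cliqueBlowup H w).Coloring α) (v : V) : Finset α :=
  univ.image fun a : Fin (w v) => c ⟨v, a⟩

theorem mem_palette {c : (cliqueBlowup H w).Coloring α} {v : V} {x : α} :
    x ∈ palette c v ↔ ∃ a, c ⟨v, a⟩ = x := by
  simp [palette]

theorem card_palette (c : (cliqueBlowup H w).Coloring α) (v : V) : #(palette c v) = w v := by
  have hinj : Function.Injective fun a : Fin (w v) => c ⟨v, a⟩ := by
    intro a b hab
    by_contra hne
    have hadj : (cliqueBlowup H w).Adj ⟨v, a⟩ ⟨v, b⟩ := ⟨by simpa using hne, Or.inl rfl⟩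
    exact c.valid hadj hab
  rw [palette, card_image_of_injective _ hinj, card_univ, Fintype.card_fin]

theorem disjoint_palette (c : (cliqueBlowup H w).Coloring α) {u v : V} (huv : H.Adj u v) :
    Disjoint (palette c u) (palette c v) := by
  rw [Finset.disjoint_left]
  intro x hu hv
  obtain ⟨a, rfl⟩ := mem_palette.1 hu
  obtain ⟨b, hb⟩ := mem_palette.1 hv
  exact c.valid ⟨fun h => huv.ne (congrArg Sigma.fst h), Or.inr huv⟩ hb.symm

theorem card_biUnion_palette (c : (cliqueBlowup H w).Coloring α) {C : Finset V}
    (hC : H.IsClique C) : #(C.biUnion (palette c)) = ∑ v ∈ C, w v := by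
  rw [card_biUnion fun u hu v hv huv => disjoint_palette c (hC hu hv huv)]
  exact sum_congr rfl fun v _ => card_palette c v

end cliqueBlowup

/-- Vertex weights on `H` for which every finite vertex set `S` contains a clique of total weight
at least `|S|`. This forces Hall's condition on the palettes of every proper coloring of
`cliqueBlowup H w`. -/
def IsHallWeight {V : Type*} (H : SimpleGraph V) (w : V → ℕ) : Prop :=
  ∀ S : Finset V, ∃ C ⊆ S, H.IsClique C ∧ #S ≤ ∑ v ∈ C, w v

namespace IsHallWeight

theorem arrowsR_cliqueBlowup {V : Type} {H : SimpleGraph V} {w : V → ℕ} (hw : IsHallWeight H w) :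
    ArrowsR (cliqueBlowup H w) H := by
  intro c hc
  let c' : (cliqueBlowup H w).Coloring ℕ := .mk c (hc _ _)
  have hall (S : Finset V) : #S ≤ #(S.biUnion (cliqueBlowup.palette c')) := by
    obtain ⟨C, hCS, hC, hcard⟩ := hw S
    rw [← cliqueBlowup.card_biUnion_palette c' hC] at hcard
    exact hcard.trans (card_le_card (biUnion_subset_biUnion_of_subset_left _ hCS))
  obtain ⟨f, hf, hmem⟩ := (all_card_le_biUnion_card_iff_exists_injective _).1 hall
  choose a ha using fun v => cliqueBlowup.mem_palette.1 (hmem v)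
  exact ⟨cliqueBlowup.transversal H a, (funext ha : (fun v => c ⟨v, a v⟩) = f) ▸ hf⟩

theorem rho_le_sum {V : Type} [Fintype V] {H : SimpleGraph V} {w : V → ℕ}
    (hw : IsHallWeight H w) : rho H ≤ ∑ v, w v := by
  simpa using hw.arrowsR_cliqueBlowup.rho_le_card

end IsHallWeight

theorem isHallWeight_pathGraph {n : ℕ} {w : ℕ → ℕ}
    (hw : ∀ S ⊆ range n, S.Nonempty →
      ∃ i ∈ S, #S ≤ w i ∨ (i + 1 ∈ S ∧ #S ≤ w i + w (i + 1))) :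
    IsHallWeight (SimpleGraph.pathGraph n) fun i => w i := by
  intro S
  obtain rfl | hS := S.eq_empty_or_nonempty
  · exact ⟨∅, by simp⟩
  have hrange : S.map Fin.valEmbedding ⊆ range n := by
    intro x hx
    obtain ⟨i, -, rfl⟩ := mem_map.1 hx
    exact mem_range.2 i.isLt
  obtain ⟨_, hi, h⟩ := hw _ hrange hS.map
  obtain ⟨i, hiS, rfl⟩ := mem_map.1 hi
  rw [card_map] at h
  obtain h | ⟨hj, h⟩ := h
  · exact ⟨{i}, by simpa using hiS, by simp, by simpa using h⟩
  · obtain ⟨j, hjS, hji : (j : ℕ) = i + 1⟩ := mem_map.1 hj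
    have hadj : (SimpleGraph.pathGraph n).Adj i j := SimpleGraph.pathGraph_adj.2 (Or.inl hji.symm)
    refine ⟨{i, j}, by simp [insert_subset_iff, hiS, hjS], ?_, ?_⟩
    · simpa using fun _ => hadj
    · rw [sum_pair hadj.ne, hji]
      exact h

theorem two_mul_card_le_or_exists_succ_mem {n : ℕ} {S : Finset ℕ} (hS : S ⊆ range n) :
    2 * #S ≤ n + 1 ∨ ∃ j ∈ S, j + 1 ∈ S ∧ 2 * #S ≤ n + j + 2 := by
  induction n using Nat.twoStepInduction generalizing S with
  | zero => simp [subset_empty.1 hS]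
  | one => exact Or.inl (by simpa using card_le_card hS)
  | more n ih _ =>
    by_cases htop : n ∈ S ∧ n + 1 ∈ S
    · have hcard : #S ≤ n + 2 := by simpa using card_le_card hS
      exact Or.inr ⟨n, htop.1, htop.2, by omega⟩
    have hdiff : #(S \ range n) ≤ 1 := card_le_one.2 (by grind)
    have hcard : #S ≤ #(S ∩ range n) + 1 := by
      rw [← card_inter_add_card_sdiff S (range n)]
      exact Nat.add_le_add_left hdiff _
    obtain h | ⟨j, hj, hj', h⟩ := ih (inter_subset_right (s₁ := S))
    · exact Or.inl (by omega)
    · exact Or.inr ⟨j, mem_of_mem_inter_left hj, mem_of_mem_inter_left hj', by omega⟩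

theorem exists_card_le_three_mul_div_four {S : Finset ℕ} (hS : S.Nonempty) :
    ∃ i ∈ S, #S ≤ 3 * i / 4 + 1 ∨
      (i + 1 ∈ S ∧ #S ≤ (3 * i / 4 + 1) + (3 * (i + 1) / 4 + 1)) := by
  set x := S.max' hS
  have hx : x ∈ S := S.max'_mem hS
  have hSx : S ⊆ range (x + 1) := fun i hi => mem_range_succ_iff.2 (S.le_max' i hi)
  by_cases hcard : #S ≤ 3 * x / 4 + 1
  · exact ⟨x, hx, Or.inl hcard⟩
  obtain h | ⟨j, hj, hj', h⟩ := two_mul_card_le_or_exists_succ_mem hSx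
  · omega
  · have hSj : 2 * #S ≤ 3 * j + 4 := by omega
    exact ⟨j, hj, Or.inr ⟨hj', by omega⟩⟩

theorem rho_pathGraph_le_sum_three_mul_div_four (n : ℕ) :
    rho (SimpleGraph.pathGraph n) ≤ ∑ i ∈ range n, (3 * i / 4 + 1) := by
  rw [← Fin.sum_univ_eq_sum_range]
  exact (isHallWeight_pathGraph fun _ _ => exists_card_le_three_mul_div_four).rho_le_sum

theorem rho_pathGraph_seven_le : rho (SimpleGraph.pathGraph 7) ≤ 18 :=
  (isHallWeight_pathGraph (w := fun i => [1, 2, 3, 4, 2, 2, 4].getD i 0)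
    (by decide +kernel)).rho_le_sum

theorem sum_three_mul_div_four_add_le {n : ℕ} (hn : n ≠ 7) :
    ∑ i ∈ range n, (3 * i / 4 + 1) + 3 * (n / 7) ≤ 1 + ∑ i ∈ range n, i := by
  obtain hlt | hgt := hn.lt_or_gt
  · interval_cases n <;> decide
  · induction n, hgt using Nat.le_induction with
    | base => decide
    | succ n hn ih =>
      have := ih (by omega)
      rw [sum_range_succ, sum_range_succ]
      omega

/-- `ρ(P_n) ≤ 1 + n(n−1)/2 − 3⌊n/7⌋` for every `n ≥ 1`. -/
theorem stmt17 (n : ℕ) (hn : 1 ≤ n) :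
    rho (SimpleGraph.pathGraph n) ≤ 1 + n * (n - 1) / 2 - 3 * (n / 7) := by
  obtain rfl | hn7 := eq_or_ne n 7
  · exact rho_pathGraph_seven_le.trans (by norm_num)
  · apply le_tsub_of_add_le_right
    rw [← sum_range_id]
    exact (Nat.add_le_add_right (rho_pathGraph_le_sum_three_mul_div_four n) _).trans
      (sum_three_mul_div_four_add_le hn7)
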